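/- arXiv:2605.20526 — 2 statements merged into one kernel-verified Lean document; each statement's English description precedes it below -/
import Mathlib

section
/- Let H be a finite connected simple graph with at least two vertices. Then the state digraph D(H) is acyclic: there is no nonempty directed cycle of arcs in D(H). -/
/-!
The left sides of the states strictly increase along every arc `σ → τ`, so no state can be
reached from itself.

Since the centres are at distance `r_σ + r_τ + 1`, the balls `X_σ` and `X_τ` are disjoint. A ball
is connected, so `X_σ` lies in the single component of `H - X_τ` that contains `c_σ`, namely `L_τ`;
likewise `X_τ ⊆ R_σ`. A vertex of `L_σ` is outside `X_τ ⊆ R_σ`, so it lies in `L_τ` or in `R_τ`.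
The set `L_σ ∩ R_τ` is closed under adjacency (a neighbour in `X_σ ⊆ L_τ` would join the two
components of `H - X_τ`) and misses `c_σ`, so it is empty because `H` is connected. Hence
`L_σ ⊆ L_τ`, strictly since `c_σ ∈ L_τ \ L_σ`.
-/

open scoped Classical

namespace BD

variable {V : Type*}

/-- The ball of radius `p` around `v`: all vertices at graph distance at most `p`. -/
def ball (G : SimpleGraph V) (v : V) (p : ℕ) : Set V := {x | G.dist v x ≤ p}

/-- Open neighborhood of a vertex set: vertices outside `S` adjacent to some vertex of `S`. -/
def nbhd (G : SimpleGraph V) (S : Set V) : Set V :=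
  {x | x ∉ S ∧ ∃ y ∈ S, G.Adj y x}

/-- A broadcast is dominating if every vertex lies in the ball of some active vertex. -/
def Dominating (G : SimpleGraph V) (f : V → ℕ) : Prop :=
  ∀ u, ∃ v, 0 < f v ∧ u ∈ ball G v (f v)

/-- A broadcast is efficient if the balls of distinct active vertices are pairwise disjoint. -/
def Efficient (G : SimpleGraph V) (f : V → ℕ) : Prop :=
  ∀ u v, 0 < f u → 0 < f v → u ≠ v → Disjoint (ball G u (f u)) (ball G v (f v))

/-- The cost of a broadcast: the sum of its values. -/
def cost [Fintype V] (f : V → ℕ) : ℕ := ∑ v, f v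

/-- Adjacency in the domination graph of a broadcast: distinct active vertices whose
balls are joined by an edge of `G`. -/
def DomAdj (G : SimpleGraph V) (f : V → ℕ) (u v : V) : Prop :=
  0 < f u ∧ 0 < f v ∧ u ≠ v ∧ ∃ x ∈ ball G u (f u), ∃ y ∈ ball G v (f v), G.Adj x y

/-- The domination graph of the broadcast `f` is a path: the active vertices can be
enumerated as `a 0, …, a (t-1)` so that domination-graph adjacency is exactly
consecutiveness in this enumeration. -/
def PathShaped (G : SimpleGraph V) (f : V → ℕ) : Prop :=
  ∃ (t : ℕ) (a : ℕ → V), 1 ≤ t ∧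
    (∀ i j, i < t → j < t → a i = a j → i = j) ∧
    (∀ v, 0 < f v ↔ ∃ i, i < t ∧ a i = v) ∧
    (∀ i j, i < t → j < t → (DomAdj G f (a i) (a j) ↔ (i + 1 = j ∨ j + 1 = i)))

/-- `γ_path`: minimum cost of an efficient dominating broadcast whose domination
graph is a path. -/
noncomputable def gammaPath (G : SimpleGraph V) [Fintype V] : ℕ :=
  sInf {c | ∃ f, Dominating G f ∧ Efficient G f ∧ PathShaped G f ∧ cost f = c}

/-- `γ_b`: minimum cost of a dominating broadcast. -/
noncomputable def gammaB (G : SimpleGraph V) [Fintype V] : ℕ :=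
  sInf {c | ∃ f, Dominating G f ∧ cost f = c}

/-- Eccentricity of a vertex. -/
noncomputable def ecc [Fintype V] (G : SimpleGraph V) (v : V) : ℕ :=
  Finset.univ.sup (fun x => G.dist v x)

/-- Radius of a graph. -/
noncomputable def radius [Fintype V] [Nonempty V] (G : SimpleGraph V) : ℕ :=
  Finset.univ.inf' Finset.univ_nonempty (ecc G)

/-- `C` is a connected component (as a vertex set) of the subgraph of `G` induced on `S`:
a maximal nonempty connected subset of `S`. -/
def IsCompOf (G : SimpleGraph V) (S C : Set V) : Prop :=
  C.Nonempty ∧ C ⊆ S ∧ (G.induce C).Connected ∧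
    ∀ D : Set V, C ⊆ D → D ⊆ S → (G.induce D).Connected → D = C

/-- A state of the state digraph `D(H)`: an oriented ball `(c, r)` together with its
left and right residual sides `L`, `R`, which partition the complement of the ball and
each of which is empty or a connected component of the residual graph. -/
structure GState (G : SimpleGraph V) where
  c : V
  r : ℕ
  L : Set V
  R : Set V
  r_pos : 1 ≤ r
  disj : L ∩ R = ∅
  union : L ∪ R = (ball G c r)ᶜ
  hL : L = ∅ ∨ IsCompOf G ((ball G c r)ᶜ) L
  hR : R = ∅ ∨ IsCompOf G ((ball G c r)ᶜ) R

/-- The ball of a state. -/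
def Xball {G : SimpleGraph V} (σ : GState G) : Set V := ball G σ.c σ.r

/-- The arc relation of the state digraph `D(H)`: conditions (A1)–(A4). -/
def Arc {G : SimpleGraph V} (σ τ : GState G) : Prop :=
  σ.R.Nonempty ∧ τ.L.Nonempty ∧
  G.dist σ.c τ.c = σ.r + τ.r + 1 ∧
  τ.c ∈ σ.R ∧ σ.c ∈ τ.L ∧
  nbhd G (Xball σ) ∩ σ.R ⊆ Xball τ ∧
  nbhd G (Xball τ) ∩ τ.L ⊆ Xball σ

end BD

namespace BD

variable {V : Type*} {G : SimpleGraph V}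

/-- A component of `G[S]` absorbs every neighbour in `S` of its vertices, by maximality. -/
lemma IsCompOf.mem_of_adj {S C : Set V} (h : IsCompOf G S C) {x y : V} (hx : x ∈ C)
    (hxy : G.Adj x y) (hy : y ∈ S) : y ∈ C := by
  obtain ⟨-, hCS, hconn, hmax⟩ := h
  have hD : (G.induce (C ∪ {x, y})).Connected :=
    SimpleGraph.induce_union_connected hconn.preconnected
      (SimpleGraph.induce_pair_connected_of_adj hxy).preconnected
      ⟨x, hx, by simp⟩
  rw [← hmax (C ∪ {x, y}) Set.subset_union_left ?_ hD]
  · simp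
  · rintro z (hz | rfl | rfl)
    exacts [hCS hz, hCS hx, hy]

/-- Balls are connected, so a ball inside `S` stays in the component of its centre. -/
lemma IsCompOf.ball_subset (hG : G.Connected) {S C : Set V} (h : IsCompOf G S C) {c : V}
    {r : ℕ} (hc : c ∈ C) (hS : ball G c r ⊆ S) : ball G c r ⊆ C := by
  have key : ∀ n x, G.dist c x = n → n ≤ r → x ∈ C := by
    intro n
    induction n using Nat.strong_induction_on with
    | _ n ih =>
      intro x hx hn
      -- The second vertex of a geodesic from `x` to `c` is strictly closer to `c`.
      obtain ⟨p, hp⟩ := hG.exists_walk_length_eq_dist x c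
      cases p with
      | nil => exact hc
      | @cons _ u _ hxu q =>
        have hq := SimpleGraph.dist_le q
        rw [SimpleGraph.dist_comm] at hq
        rw [SimpleGraph.dist_comm, hx, SimpleGraph.Walk.length_cons] at hp
        exact h.mem_of_adj (ih _ (by omega) u rfl (by omega)) hxu.symm
          (hS (show G.dist c x ≤ r by omega))
  exact fun x hx => key _ x rfl hx

lemma GState.isCompOf_L (σ : GState G) {x : V} (hx : x ∈ σ.L) :
    IsCompOf G (Xball σ)ᶜ σ.L :=
  σ.hL.resolve_left (Set.nonempty_of_mem hx).ne_empty

lemma GState.isCompOf_R (σ : GState G) {x : V} (hx : x ∈ σ.R) :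
    IsCompOf G (Xball σ)ᶜ σ.R :=
  σ.hR.resolve_left (Set.nonempty_of_mem hx).ne_empty

lemma Arc.disjoint_balls (hG : G.Connected) {σ τ : GState G} (h : Arc σ τ) :
    Disjoint (Xball σ) (Xball τ) := by
  rw [Set.disjoint_left]
  intro x hx hx'
  have hσ : G.dist σ.c x ≤ σ.r := hx
  have hτ : G.dist τ.c x ≤ τ.r := hx'
  have htri := hG.dist_triangle (u := σ.c) (v := x) (w := τ.c)
  rw [G.dist_comm (u := x)] at htri
  have := h.2.2.1
  omega

/-- Left sides strictly increase along arcs. -/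
lemma Arc.ssubset (hG : G.Connected) {σ τ : GState G} (h : Arc σ τ) : σ.L ⊂ τ.L := by
  have hdisj := h.disjoint_balls hG
  obtain ⟨-, -, -, hτR, hσL, -, -⟩ := h
  have hXσ : Xball σ ⊆ τ.L :=
    (τ.isCompOf_L hσL).ball_subset hG hσL hdisj.subset_compl_right
  have hXτ : Xball τ ⊆ σ.R :=
    (σ.isCompOf_R hτR).ball_subset hG hτR hdisj.subset_compl_left
  have hc : σ.c ∉ σ.L := fun hc => by
    have : σ.c ∈ (ball G σ.c σ.r)ᶜ := σ.union ▸ Or.inl hc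
    exact this (by simp [ball])
  have hLX : ∀ x ∈ σ.L, x ∈ (Xball τ)ᶜ := fun x hx hx' =>
    Set.disjoint_left.1 (Set.disjoint_iff_inter_eq_empty.2 σ.disj) hx (hXτ hx')
  refine ⟨fun x hx => ?_, fun hsub => hc (hsub hσL)⟩
  have hxLR : x ∈ τ.L ∪ τ.R := by rw [τ.union]; exact hLX x hx
  refine hxLR.resolve_right fun hxR => ?_
  have hclosed : ∀ u v, u ∈ σ.L ∩ τ.R → G.Adj u v → v ∈ σ.L ∩ τ.R := by
    rintro u v ⟨huL, huR⟩ huv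
    have hvX : v ∉ Xball σ := fun hv =>
      Set.disjoint_left.1 (Set.disjoint_iff_inter_eq_empty.2 τ.disj)
        ((τ.isCompOf_L hσL).mem_of_adj (hXσ hv) huv.symm (hLX u huL)) huR
    have hvL := (σ.isCompOf_L huL).mem_of_adj huL huv hvX
    exact ⟨hvL, (τ.isCompOf_R huR).mem_of_adj huR huv (hLX v hvL)⟩
  have hwalk : ∀ {u v : V}, G.Walk u v → u ∈ σ.L ∩ τ.R → v ∈ σ.L ∩ τ.R := by
    intro u v p
    induction p with
    | nil => exact id
    | cons hadj _ ih => exact fun hu => ih (hclosed _ _ hu hadj)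
  obtain ⟨p⟩ := hG x σ.c
  exact hc (hwalk p ⟨hx, hxR⟩).1

end BD

/-- The state digraph `D(H)` is acyclic: no state lies on a nonempty
directed cycle of arcs (i.e. the transitive closure of the arc relation is irreflexive). -/
theorem state_digraph_acyclic {V : Type*} [Fintype V] (H : SimpleGraph V)
    (hconn : H.Connected) (hcard : 1 < Fintype.card V) :
    ∀ σ : BD.GState H, ¬ Relation.TransGen (fun a b : BD.GState H => BD.Arc a b) σ σ := by
  intro σ hσ
  have key : ∀ τ, Relation.TransGen (fun a b : BD.GState H => BD.Arc a b) σ τ → σ.L ⊂ τ.L := by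
    intro τ h
    induction h with
    | single h => exact h.ssubset hconn
    | tail _ h ih => exact ih.trans (h.ssubset hconn)
  exact (key σ hσ).ne rfl
end

section
/- Let H be a finite connected simple graph with at least two vertices and let P = σ₁, …, σ_t be a directed path in the state digraph D(H) from a source state to a sink state. If 1 ≤ i and i + 1 < j ≤ t, then no edge of H joins X_{σ_i} to X_{σ_j}; moreover for each i < t there is an edge of H joining X_{σ_i} to X_{σ_{i+1}}. -/
/-!
The sides `L` and `R` of a state are distinct components of the complement of its ball, so no
edge joins them (`not_adj_L_R`). For an arc `σ → τ` the balls are disjoint, because the centres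
are `r_σ + r_τ + 1` apart. The ball of `τ` is connected, avoids the ball of `σ` and contains
`c_τ ∈ R_σ`, hence lies in `R_σ` (`Xball_subset_R`); reversing the orientation, the ball of `σ`
lies in `L_τ`. Every component of the complement of a ball is attached to that ball, so
`R_τ` together with the ball of `τ` is connected and avoids the ball of `σ`, whence `R_τ ⊆ R_σ`
(`R_subset_R`).

Therefore the right sides decrease along the path. If `i + 1 < j`, the middle state `σ (i + 1)`
has the ball of `σ i` in its left side and the ball of `σ j` in its right side, and no edge joins
these sides. For consecutive states, a geodesic between the centres leaves the first ball
along an edge whose other end lies in the second ball.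
-/

open scoped Classical

namespace BD

variable {V : Type*} {G : SimpleGraph V}

/-- A vertex at positive distance from `c` has a neighbour one step closer to `c`. -/
lemma exists_adj_closer (hG : G.Connected) {c v : V} {n : ℕ} (h : G.dist c v = n + 1) :
    ∃ u, G.Adj u v ∧ G.dist c u = n := by
  obtain ⟨p, hp⟩ := hG.exists_walk_length_eq_dist v c
  rw [SimpleGraph.dist_comm, h] at hp
  cases p with
  | nil => simp at hp
  | @cons _ u _ huv q =>
    refine ⟨u, huv.symm, ?_⟩
    have h1 : G.dist u c ≤ q.length := SimpleGraph.dist_le q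
    have h2 : G.dist c v ≤ G.dist c u + G.dist u v := hG.dist_triangle
    have h3 : G.dist u v = 1 := SimpleGraph.dist_eq_one_iff_adj.mpr huv.symm
    rw [SimpleGraph.dist_comm] at h1
    simp only [SimpleGraph.Walk.length_cons] at hp
    omega

/-- The state with the same ball and the opposite orientation. -/
def GState.rev (σ : GState G) : GState G where
  c := σ.c
  r := σ.r
  L := σ.R
  R := σ.L
  r_pos := σ.r_pos
  disj := by rw [Set.inter_comm]; exact σ.disj
  union := by rw [Set.union_comm]; exact σ.union
  hL := σ.hR
  hR := σ.hL

/-- Reversing orientations reverses arcs, so facts about right sides transfer to left sides. -/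
lemma Arc.rev {σ τ : GState G} (h : Arc σ τ) : Arc τ.rev σ.rev := by
  obtain ⟨h1, h2, h3, h4, h5, h6, h7⟩ := h
  refine ⟨h2, h1, ?_, h5, h4, h7, h6⟩
  simp only [GState.rev]
  rw [SimpleGraph.dist_comm, h3]
  omega

lemma not_mem_Xball_iff (σ : GState G) {x : V} : x ∉ Xball σ ↔ x ∈ σ.L ∨ x ∈ σ.R := by
  change x ∈ (ball G σ.c σ.r)ᶜ ↔ _
  rw [← σ.union]
  rfl

/-- The two sides are distinct components: an edge between them would make their union a
connected set larger than `L`. -/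
lemma not_adj_L_R (σ : GState G) {x y : V} (hx : x ∈ σ.L) (hy : y ∈ σ.R) : ¬ G.Adj x y := by
  intro hxy
  rcases σ.hL with hL | ⟨-, -, hLc, hmax⟩
  · simp [hL] at hx
  rcases σ.hR with hR | ⟨-, -, hRc, -⟩
  · simp [hR] at hy
  have hconn : (G.induce (σ.L ∪ σ.R)).Connected :=
    SimpleGraph.connected_induce_union hLc.preconnected hRc.preconnected hx hy hxy
  have hyL : y ∈ σ.L := by
    rw [← hmax _ Set.subset_union_left σ.union.subset hconn]
    exact Or.inr hy
  have : y ∈ σ.L ∩ σ.R := ⟨hyL, hy⟩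
  simp [σ.disj] at this

/-- A neighbour of the right side that avoids the ball is in the right side. -/
lemma mem_R_of_adj (σ : GState G) {x y : V} (hx : x ∈ σ.R) (hxy : G.Adj x y)
    (hy : y ∉ Xball σ) : y ∈ σ.R :=
  ((not_mem_Xball_iff σ).mp hy).resolve_left fun hL => not_adj_L_R σ hL hx hxy.symm

lemma Xball_disjoint (hG : G.Connected) {σ τ : GState G} (h : Arc σ τ) {x : V}
    (hx : x ∈ Xball τ) : x ∉ Xball σ := by
  intro hx'
  have h1 : G.dist τ.c x ≤ τ.r := hx
  have h2 : G.dist σ.c x ≤ σ.r := hx'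
  have h3 : G.dist σ.c τ.c ≤ G.dist σ.c x + G.dist x τ.c := hG.dist_triangle
  rw [SimpleGraph.dist_comm (u := x)] at h3
  have h4 := h.2.2.1
  omega

/-- The ball of `τ` grows from `c_τ ∈ R_σ` along geodesics that avoid the ball of `σ`. -/
lemma Xball_subset_R (hG : G.Connected) {σ τ : GState G} (h : Arc σ τ) : Xball τ ⊆ σ.R := by
  have key : ∀ n x, G.dist τ.c x = n → n ≤ τ.r → x ∈ σ.R := by
    intro n
    induction n with
    | zero =>
      intro x hx _
      rw [← hG.dist_eq_zero_iff.mp hx]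
      exact h.2.2.2.1
    | succ n ih =>
      intro x hx hn
      obtain ⟨u, hux, hu⟩ := exists_adj_closer hG hx
      exact mem_R_of_adj σ (ih u hu (by omega)) hux
        (Xball_disjoint hG h (show G.dist τ.c x ≤ τ.r by omega))
  exact fun x hx => key _ x rfl hx

lemma Xball_subset_L (hG : G.Connected) {σ τ : GState G} (h : Arc σ τ) : Xball σ ⊆ τ.L :=
  Xball_subset_R hG h.rev

/-- A geodesic from a vertex of `R_τ` to `c_τ` stays in `R_τ` until it enters the ball of `τ`,
so it avoids the ball of `σ`, which lies in `L_τ`. -/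
lemma R_subset_R (hG : G.Connected) {σ τ : GState G} (h : Arc σ τ) : τ.R ⊆ σ.R := by
  have key : ∀ n x, G.dist τ.c x = n → x ∈ τ.R → x ∈ σ.R := by
    intro n
    induction n with
    | zero =>
      intro x hx _
      rw [← hG.dist_eq_zero_iff.mp hx]
      exact h.2.2.2.1
    | succ n ih =>
      intro x hx hxR
      obtain ⟨u, hux, hu⟩ := exists_adj_closer hG hx
      have huR : u ∈ σ.R := by
        by_cases huX : u ∈ Xball τ
        · exact Xball_subset_R hG h huX
        · exact ih u hu (mem_R_of_adj τ hxR hux.symm huX)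
      refine mem_R_of_adj σ huR hux fun hxX => ?_
      have : x ∈ τ.L ∩ τ.R := ⟨Xball_subset_L hG h hxX, hxR⟩
      simp [τ.disj] at this
  exact fun x hx => key _ x rfl hx

/-- The balls of an arc are joined by the edge along which a geodesic between the centres leaves
the first ball. -/
lemma exists_adj_of_arc (hG : G.Connected) {σ τ : GState G} (h : Arc σ τ) :
    ∃ x ∈ Xball σ, ∃ y ∈ Xball τ, G.Adj x y := by
  -- Walking `k` steps back from `c_τ` along a geodesic to `c_σ`.
  have key : ∀ k, k ≤ σ.r + τ.r + 1 →
      ∃ y, G.dist τ.c y ≤ k ∧ G.dist σ.c y = σ.r + τ.r + 1 - k := by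
    intro k
    induction k with
    | zero => exact fun _ => ⟨τ.c, by simp, h.2.2.1⟩
    | succ k ih =>
      intro hk
      obtain ⟨y, hy1, hy2⟩ := ih (by omega)
      obtain ⟨u, huy, hu⟩ :=
        exists_adj_closer hG (n := σ.r + τ.r + 1 - (k + 1)) (hy2.trans (by omega))
      have h1 : G.dist τ.c u ≤ G.dist τ.c y + G.dist y u := hG.dist_triangle
      have h2 : G.dist y u = 1 := SimpleGraph.dist_eq_one_iff_adj.mpr huy.symm
      exact ⟨u, by omega, hu⟩
  obtain ⟨y, hy1, hy2⟩ := key τ.r (by omega)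
  obtain ⟨x, hxy, hx⟩ := exists_adj_closer hG (n := σ.r) (hy2.trans (by omega))
  exact ⟨x, hx.le, y, hy1, hxy⟩

end BD

/-- On a source-to-sink directed path in `D(H)`, no edge of `H` joins two
nonconsecutive balls, and consecutive balls are joined by an edge. -/
theorem path_balls_adjacency {V : Type*} [Fintype V] (H : SimpleGraph V)
    (hconn : H.Connected) (hcard : 1 < Fintype.card V)
    (t : ℕ) (ht : 1 ≤ t) (σ : ℕ → BD.GState H)
    (hpath : ∀ i, i + 1 < t → BD.Arc (σ i) (σ (i + 1)))
    (hsource : (σ 0).L = ∅) (hsink : (σ (t - 1)).R = ∅) :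
    (∀ i j, i + 1 < j → j < t →
      ¬ ∃ x ∈ BD.Xball (σ i), ∃ y ∈ BD.Xball (σ j), H.Adj x y) ∧
    (∀ i, i + 1 < t →
      ∃ x ∈ BD.Xball (σ i), ∃ y ∈ BD.Xball (σ (i + 1)), H.Adj x y) := by
  refine ⟨?_, fun i hi => BD.exists_adj_of_arc hconn (hpath i hi)⟩
  have hball : ∀ d k, k + d + 1 < t → BD.Xball (σ (k + d + 1)) ⊆ (σ k).R := by
    intro d
    induction d with
    | zero => exact fun k hk => BD.Xball_subset_R hconn (hpath k hk)
    | succ d ih =>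
      intro k hk
      have h1 := ih (k + 1) (by omega)
      rw [show k + 1 + d + 1 = k + (d + 1) + 1 by omega] at h1
      exact h1.trans (BD.R_subset_R hconn (hpath k (by omega)))
  rintro i j hij hj ⟨x, hx, y, hy, hxy⟩
  -- The middle state `σ (i + 1)` separates the two balls.
  obtain ⟨d, rfl⟩ : ∃ d, j = i + 1 + d + 1 := ⟨j - (i + 2), by omega⟩
  exact BD.not_adj_L_R (σ (i + 1)) (BD.Xball_subset_L hconn (hpath i (by omega)) hx)
    (hball d (i + 1) hj hy) hxy
end
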